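/- Let d >= 4, let (b_1,...,b_d) be a uniformly random orthonormal basis of R^d (Haar-distributed under the orthogonal group), and let phi be a real-valued square-integrable function on the unit sphere with respect to the uniform probability measure u. Then |Cov(phi(b_1), phi(b_2))| <= Var_u(phi)/(d-1). -/

import Mathlib

open MeasureTheory
open scoped InnerProductSpace

lemma hb_step {H : Type*} [NormedAddCommGroup H] [InnerProductSpace ℝ H] [CompleteSpace H]
    (T : H →L[ℝ] H) (hsym : ∀ x y, inner ℝ (T x) y = inner ℝ x (T y))
    (V : ℕ → Submodule ℝ H) [∀ k, (V k).HasOrthogonalProjection] (hmono : Monotone V)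
    (lam : ℕ → ℝ) (C : ℝ) (hlam : ∀ k, |lam (k+1)| ≤ C)
    (hT : ∀ k, ∀ x ∈ V k, T x ∈ V k)
    (hT' : ∀ k, ∀ x ∈ V (k+1), T x - lam (k+1) • x ∈ V k) (k : ℕ) :
    ∀ x ∈ V k, (∀ y ∈ V 0, inner ℝ y x = 0) → |inner ℝ (T x) x| ≤ C * ‖x‖^2 := by
  induction k with
  | zero =>
    intro x hx h
    have : x = 0 := by simpa using h x hx
    simp [this]
  | succ k ih =>
    intro x hx h
    set y := (V k).starProjection x with hy
    have hyV : y ∈ V k := Submodule.starProjection_apply_mem _ _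
    set z := x - y with hz
    have hzo : ∀ u ∈ V k, inner ℝ u z = 0 := by
      intro u hu
      exact Submodule.inner_right_of_mem_orthogonal hu
        (Submodule.sub_starProjection_mem_orthogonal x)
    have hxy : x = y + z := by simp [hz]
    have hy0 : ∀ u ∈ V 0, inner ℝ u y = 0 := by
      intro u hu
      have h1 := h u hu
      rw [hxy, inner_add_right, hzo u (hmono (Nat.zero_le k) hu)] at h1
      simpa using h1
    have hzV : z ∈ V (k+1) := (V (k+1)).sub_mem hx (hmono (Nat.le_succ k) hyV)
    have h1 : inner ℝ (T y) z = 0 := hzo _ (hT k y hyV)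
    have h2 : inner ℝ (T z) y = 0 := by rw [hsym, real_inner_comm]; exact h1
    have h3 : inner ℝ (T z) z = lam (k+1) * ‖z‖^2 := by
      have := hzo _ (hT' k z hzV)
      rw [inner_sub_left, inner_smul_left, real_inner_self_eq_norm_sq] at this
      simp at this
      linarith
    have hyz : inner ℝ y z = 0 := hzo y hyV
    have h4 : inner ℝ (T x) x = inner ℝ (T y) y + lam (k+1) * ‖z‖^2 := by
      rw [hxy, map_add, inner_add_left, inner_add_right, inner_add_right, h1, h2, h3]; ring
    have h5 : ‖x‖^2 = ‖y‖^2 + ‖z‖^2 := by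
      rw [hxy, norm_add_sq_real, hyz]; ring
    rw [h4, h5]
    have h6 := ih y hyV hy0
    have h7 : |lam (k+1) * ‖z‖^2| ≤ C * ‖z‖^2 := by
      rw [abs_mul, abs_of_nonneg (sq_nonneg ‖z‖)]
      exact mul_le_mul_of_nonneg_right (hlam k) (sq_nonneg _)
    have h8 := abs_add_le (inner ℝ (T y) y) (lam (k+1) * ‖z‖^2)
    linarith

lemma hb_closed {H : Type*} [NormedAddCommGroup H] [InnerProductSpace ℝ H] [CompleteSpace H]
    (T : H →L[ℝ] H) (hsym : ∀ x y, inner ℝ (T x) y = inner ℝ x (T y))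
    (V : ℕ → Submodule ℝ H) [∀ k, (V k).HasOrthogonalProjection] (hmono : Monotone V)
    (hdense : ⊤ ≤ (⨆ k, V k).topologicalClosure)
    (lam : ℕ → ℝ) (C : ℝ) (hlam : ∀ k, |lam (k+1)| ≤ C)
    (hT : ∀ k, ∀ x ∈ V k, T x ∈ V k)
    (hT' : ∀ k, ∀ x ∈ V (k+1), T x - lam (k+1) • x ∈ V k)
    (f : H) (hf : ∀ y ∈ V 0, inner ℝ y f = 0) : |inner ℝ (T f) f| ≤ C * ‖f‖^2 := by
  have ht := Submodule.starProjection_tendsto_self V hmono f hdense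
  have h1 : Filter.Tendsto (fun k => |inner ℝ (T ((V k).starProjection f)) ((V k).starProjection f)|)
      Filter.atTop (nhds |inner ℝ (T f) f|) :=
    (((T.continuous.tendsto f).comp ht).inner ht).abs
  have h2 : Filter.Tendsto (fun k => C * ‖(V k).starProjection f‖^2)
      Filter.atTop (nhds (C * ‖f‖^2)) := (ht.norm.pow 2).const_mul C
  refine le_of_tendsto_of_tendsto' h1 h2 fun k => ?_
  refine hb_step T hsym V hmono lam C hlam hT hT' k _ (Submodule.starProjection_apply_mem _ _) ?_
  intro y hy
  have hyk : y ∈ V k := hmono (Nat.zero_le k) hy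
  have h3 : inner ℝ y (f - (V k).starProjection f) = 0 :=
    Submodule.inner_right_of_mem_orthogonal hyk (Submodule.sub_starProjection_mem_orthogonal f)
  rw [inner_sub_right, hf y hy] at h3
  linarith

lemma hb_main {H : Type*} [NormedAddCommGroup H] [InnerProductSpace ℝ H] [CompleteSpace H]
    (T : H →L[ℝ] H) (hsym : ∀ x y, inner ℝ (T x) y = inner ℝ x (T y))
    (V : ℕ → Submodule ℝ H) (hmono : Monotone V)
    (hdense : ⊤ ≤ (⨆ k, V k).topologicalClosure)
    (lam : ℕ → ℝ) (C : ℝ) (hlam : ∀ k, |lam (k+1)| ≤ C)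
    (hT0 : ∀ x ∈ V 0, T x ∈ V 0)
    (hT' : ∀ k, ∀ x ∈ V (k+1), T x - lam (k+1) • x ∈ V k)
    (f : H) (hf : ∀ y ∈ V 0, inner ℝ y f = 0) : |inner ℝ (T f) f| ≤ C * ‖f‖^2 := by
  have key : ∀ (S : H →L[ℝ] H) (A B : Submodule ℝ H), (∀ x ∈ A, S x ∈ B) →
      ∀ x ∈ A.topologicalClosure, S x ∈ B.topologicalClosure := by
    intro S A B h x hx
    exact map_mem_closure S.continuous hx h
  have : ∀ k, CompleteSpace (V k).topologicalClosure := fun k =>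
    (Submodule.isClosed_topologicalClosure _).completeSpace_coe
  have hT : ∀ k, ∀ x ∈ V k, T x ∈ V k := by
    intro k
    cases k with
    | zero => exact hT0
    | succ k =>
      intro x hx
      have := (V (k+1)).add_mem (hmono (Nat.le_succ k) (hT' k x hx))
        ((V (k+1)).smul_mem (lam (k+1)) hx)
      simpa using this
  refine hb_closed T hsym (fun k => (V k).topologicalClosure)
    (fun i j h => Submodule.topologicalClosure_mono (hmono h)) ?_ lam C hlam ?_ ?_ f ?_
  · refine hdense.trans (Submodule.topologicalClosure_mono ?_)
    exact iSup_mono fun k => Submodule.le_topologicalClosure _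
  · intro k; exact key T _ _ (hT k)
  · intro k x hx
    exact key (T - lam (k+1) • ContinuousLinearMap.id ℝ H) _ _ (fun x hx => by simpa using hT' k x hx) x hx
  · intro y hy
    have : (V 0).topologicalClosure ≤ (ℝ ∙ f)ᗮ := by
      refine Submodule.topologicalClosure_minimal _ ?_ (Submodule.isClosed_orthogonal _)
      intro z hz
      rw [Submodule.mem_orthogonal_singleton_iff_inner_left]
      exact hf z hz
    exact (Submodule.mem_orthogonal_singleton_iff_inner_left).1 (this hy)

/-- uniform measure on the unit sphere -/
lemma exists_unif (K : Type*) [NormedAddCommGroup K] [InnerProductSpace ℝ K]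
    [FiniteDimensional ℝ K] [MeasurableSpace K] [BorelSpace K] [Nontrivial K] :
    ∃ ν : Measure K, IsProbabilityMeasure ν ∧ (∀ᵐ w ∂ν, ‖w‖ = 1) ∧
      ∀ L : K ≃ₗᵢ[ℝ] K, Measure.map L ν = ν := by
  let ρ : Measure K := ProbabilityTheory.cond volume (Metric.ball (0:K) 1)
  have hball : volume (Metric.ball (0:K) 1) ≠ 0 :=
    (Metric.isOpen_ball.measure_pos _ ⟨0, by simp⟩).ne'
  have : IsProbabilityMeasure ρ :=
    ProbabilityTheory.cond_isProbabilityMeasure_of_finite hball measure_ball_lt_top.ne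
  have hm : Measurable (fun w : K => ‖w‖⁻¹ • w) := by fun_prop
  have hρ : ∀ L : K ≃ₗᵢ[ℝ] K, Measure.map L ρ = ρ := by
    intro L
    have hL := L.measurePreserving
    have hpre : L ⁻¹' (Metric.ball (0:K) 1) = Metric.ball 0 1 := by
      ext x; simp
    have := (hL.restrict_preimage (s := Metric.ball (0:K) 1) measurableSet_ball).map_eq
    rw [hpre] at this
    simp only [ρ, ProbabilityTheory.cond, Measure.map_smul, this]
  refine ⟨Measure.map (fun w : K => ‖w‖⁻¹ • w) ρ, Measure.isProbabilityMeasure_map hm.aemeasurable,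
    ?_, ?_⟩
  · rw [ae_map_iff hm.aemeasurable (measurableSet_eq_fun (by fun_prop) (by fun_prop))]
    have : ∀ᵐ w ∂ρ, w ≠ 0 := by
      have hac : ρ ≪ volume := ProbabilityTheory.cond_absolutelyContinuous
      exact hac.ae_le (Measure.ae_ne volume (0:K))
    filter_upwards [this] with w hw
    rw [norm_smul, norm_inv, norm_norm, inv_mul_cancel₀ (norm_ne_zero_iff.2 hw)]
  · intro L
    have hLm : Measurable L := L.continuous.measurable
    rw [Measure.map_map hLm hm]
    conv_rhs => rw [← hρ L, Measure.map_map hm hLm]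
    congr 1
    ext w
    simp

lemma exists_coef (K : Type*) [NormedAddCommGroup K] [InnerProductSpace ℝ K]
    [FiniteDimensional ℝ K] [MeasurableSpace K] [BorelSpace K] [Nontrivial K]
    (ν : Measure K) [IsProbabilityMeasure ν] (h1 : ∀ᵐ w ∂ν, ‖w‖ = 1)
    (hL : ∀ L : K ≃ₗᵢ[ℝ] K, Measure.map L ν = ν) :
    ∃ c : ℕ → ℝ, (∀ k, Odd k → c k = 0) ∧ (∀ k, |c (k+1)| ≤ 1 / (Module.finrank ℝ K : ℝ)) ∧
      ∀ k v, ∫ w, (inner ℝ w v) ^ k ∂ν = c k * ‖v‖ ^ k := by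
  obtain ⟨e, he⟩ := exists_norm_eq K (zero_le_one (α := ℝ))
  have hinv : ∀ (L : K ≃ₗᵢ[ℝ] K) (F : K → ℝ), ∫ w, F (L w) ∂ν = ∫ w, F w ∂ν := by
    intro L F
    have hLe : MeasurableEmbedding L := L.toHomeomorph.measurableEmbedding
    rw [← hLe.integral_map, hL]
  have hunit : ∀ k v, ‖v‖ = 1 → ∫ w, (inner ℝ w v) ^ k ∂ν = ∫ w, (inner ℝ w e) ^ k ∂ν := by
    intro k v hv
    have hR : (ℝ ∙ (v - e))ᗮ.reflection v = e := Submodule.reflection_sub (by rw [hv, he])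
    rw [← hinv ((ℝ ∙ (v - e))ᗮ.reflection) (fun w => (inner ℝ w e)^k)]
    congr 1; ext w
    have := LinearIsometryEquiv.inner_map_map ((ℝ ∙ (v - e))ᗮ.reflection) w v
    rw [hR] at this
    rw [this]
  have hb : ∀ v : K, ‖v‖ = 1 → ∀ᵐ w ∂ν, |inner ℝ w v| ≤ 1 := by
    intro v hv
    filter_upwards [h1] with w hw
    have := abs_real_inner_le_norm w v
    rwa [hw, hv, one_mul] at this
  have hbd : ∀ k, ∀ v : K, ‖v‖ = 1 → Integrable (fun w => (inner ℝ w v)^k) ν := by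
    intro k v hv
    refine Integrable.of_bound (C := 1) (by fun_prop) ?_
    filter_upwards [hb v hv] with w hw
    rw [norm_pow, Real.norm_eq_abs]
    exact pow_le_one₀ (abs_nonneg _) hw
  have hodd : ∀ k, Odd k → ∫ w, (inner ℝ w e) ^ k ∂ν = 0 := by
    intro k hk
    have := hinv (LinearIsometryEquiv.neg ℝ) (fun w => (inner ℝ w e)^k)
    simp only [LinearIsometryEquiv.coe_neg, inner_neg_left, hk.neg_pow, integral_neg] at this
    linarith
  have h2 : ∫ w, (inner ℝ w e) ^ 2 ∂ν = 1 / (Module.finrank ℝ K : ℝ) := by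
    let B := stdOrthonormalBasis ℝ K
    have hs : ∑ i, ∫ w, (inner ℝ w (B i)) ^ 2 ∂ν = 1 := by
      rw [← integral_finsetSum _ (fun i _ => hbd 2 (B i) (B.norm_eq_one i))]
      have : ∀ᵐ w ∂ν, ∑ i, (inner ℝ w (B i)) ^ 2 = (1:ℝ) := by
        filter_upwards [h1] with w hw
        have := B.sum_sq_norm_inner_left w
        simp only [Real.norm_eq_abs, sq_abs] at this
        rw [this, hw]; norm_num
      rw [integral_congr_ae this]; simp
    rw [Finset.sum_congr rfl (fun i _ => hunit 2 (B i) (B.norm_eq_one i))] at hs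
    simp at hs
    rw [eq_div_iff (by have := Module.finrank_pos (R := ℝ) (M := K); positivity)]
    linarith
  refine ⟨fun k => ∫ w, (inner ℝ w e) ^ k ∂ν, hodd, ?_, ?_⟩
  · intro k
    rcases Nat.even_or_odd (k+1) with h | h
    · rw [abs_of_nonneg (integral_nonneg fun w => h.pow_nonneg _), ← h2]
      refine integral_mono_ae (hbd _ e he) (hbd _ e he) ?_
      filter_upwards [hb e he] with w hw
      have hk : 2 ≤ k + 1 := by
        rcases h with ⟨m, hm⟩; omega
      rw [← h.pow_abs, ← sq_abs (inner ℝ w e)]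
      exact pow_le_pow_of_le_one (abs_nonneg _) hw hk
    · simp only [hodd _ h]; simp
  · intro k v
    by_cases hv : v = 0
    · subst hv
      rcases Nat.eq_zero_or_pos k with rfl | hk
      · simp
      · simp [hk.ne']
    have hn : ‖v‖ ≠ 0 := norm_ne_zero_iff.2 hv
    have hv1 : ‖(‖v‖⁻¹ • v)‖ = 1 := by
      rw [norm_smul, norm_inv, norm_norm, inv_mul_cancel₀ hn]
    simp only
    rw [← hunit k _ hv1, ← integral_mul_const]
    congr 1; ext w
    rw [inner_smul_right, ← mul_pow]
    congr 1; field_simp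


lemma exists_onb {d : ℕ} (m : Fin d → EuclideanSpace ℝ (Fin d)) (h : Orthonormal ℝ m) :
    ∃ B : OrthonormalBasis (Fin d) ℝ (EuclideanSpace ℝ (Fin d)), ∀ i, B i = m i := by
  have hs : Orthonormal ℝ ((Set.univ : Set (Fin d)).domRestrict m) :=
    h.comp _ Subtype.val_injective
  obtain ⟨B, hB⟩ := hs.exists_orthonormalBasis_extension_of_card_eq (by simp)
  exact ⟨B, fun i => hB i (Set.mem_univ i)⟩

lemma transport_aux {d : ℕ} (P : Measure (Fin d → EuclideanSpace ℝ (Fin d)))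
    [IsProbabilityMeasure P] (hON : ∀ᵐ m ∂P, Orthonormal ℝ m)
    (hinv : ∀ L : EuclideanSpace ℝ (Fin d) ≃ₗᵢ[ℝ] EuclideanSpace ℝ (Fin d),
      Measure.map (fun m i => L (m i)) P = P)
    (R : OrthonormalBasis (Fin d) ℝ (EuclideanSpace ℝ (Fin d)))
    (F : (Fin d → EuclideanSpace ℝ (Fin d)) → ENNReal) (hF : Measurable F) :
    ∫⁻ m, F (fun i => ∑ j, R i j • m j) ∂P
      = ∫⁻ m, F (fun i => WithLp.toLp 2 (fun j => m j i)) ∂P := by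
  have hinv' : ∀ (L : EuclideanSpace ℝ (Fin d) ≃ₗᵢ[ℝ] EuclideanSpace ℝ (Fin d))
      (F : (Fin d → EuclideanSpace ℝ (Fin d)) → ENNReal), Measurable F →
      ∫⁻ m, F (fun i => L (m i)) ∂P = ∫⁻ m, F m ∂P := by
    intro L F hF
    conv_rhs => rw [← hinv L]
    rw [lintegral_map hF]
    have := L.continuous
    fun_prop
  have hRm : Measurable (fun (m : Fin d → EuclideanSpace ℝ (Fin d)) (i : Fin d) =>
      ∑ j, R i j • m j) := by
    fun_prop
  have hτm : Measurable (fun (m : Fin d → EuclideanSpace ℝ (Fin d)) (i : Fin d) =>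
      (WithLp.toLp 2 (fun j => m j i) : EuclideanSpace ℝ (Fin d))) := by
    refine measurable_pi_lambda _ fun i => ?_
    exact (Continuous.measurable (by fun_prop))
  let G : (Fin d → EuclideanSpace ℝ (Fin d)) → (Fin d → EuclideanSpace ℝ (Fin d)) →
      (Fin d → EuclideanSpace ℝ (Fin d)) :=
    fun c m i => WithLp.toLp 2 (fun j => inner ℝ (c j) (∑ l, R i l • m l))
  have hGm : Measurable (Function.uncurry G) := by
    refine Continuous.measurable ?_
    unfold G Function.uncurry
    fun_prop
  have h1 : ∀ᵐ c ∂P, ∫⁻ m, F (G c m) ∂P = ∫⁻ m, F (fun i => ∑ j, R i j • m j) ∂P := by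
    filter_upwards [hON] with c hc
    obtain ⟨B, hB⟩ := exists_onb c hc
    rw [← hinv' B.repr (fun m => F (fun i => ∑ j, R i j • m j)) (hF.comp hRm)]
    congr 1; ext m; congr 1; ext i j
    simp only [G]
    rw [← hB, ← B.repr_apply_apply, map_sum]
    simp
  have h2 : ∀ᵐ m ∂P, ∫⁻ c, F (G c m) ∂P
      = ∫⁻ m, F (fun i => WithLp.toLp 2 (fun j => m j i)) ∂P := by
    filter_upwards [hON] with m hm
    obtain ⟨B, hB⟩ := exists_onb m hm
    have hmR : Orthonormal ℝ (fun i => ∑ l, R i l • m l) := by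
      have := R.orthonormal.comp_linearIsometryEquiv B.repr.symm
      have e : (fun i => ∑ l, R i l • m l) = B.repr.symm ∘ R := by
        funext i
        simp only [Function.comp, ← B.sum_repr_symm, hB]
      rw [e]; exact this
    obtain ⟨Bon, hBon⟩ := exists_onb _ hmR
    rw [← hinv' Bon.repr (fun m => F (fun i => WithLp.toLp 2 (fun j => m j i))) (hF.comp hτm)]
    congr 1; ext c; congr 1; ext i j
    simp only [G]
    rw [Bon.repr_apply_apply, hBon, real_inner_comm]
  calc _ = ∫⁻ c, ∫⁻ m, F (G c m) ∂P ∂P := by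
        rw [lintegral_congr_ae h1]; simp
    _ = ∫⁻ m, ∫⁻ c, F (G c m) ∂P ∂P :=
        lintegral_lintegral_swap (hF.comp hGm).aemeasurable
    _ = _ := by rw [lintegral_congr_ae h2]; simp

lemma transport {d : ℕ} (P : Measure (Fin d → EuclideanSpace ℝ (Fin d)))
    [IsProbabilityMeasure P] (hON : ∀ᵐ m ∂P, Orthonormal ℝ m)
    (hinv : ∀ L : EuclideanSpace ℝ (Fin d) ≃ₗᵢ[ℝ] EuclideanSpace ℝ (Fin d),
      Measure.map (fun m i => L (m i)) P = P)
    (R : OrthonormalBasis (Fin d) ℝ (EuclideanSpace ℝ (Fin d))) :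
    Measure.map (fun m i => ∑ j, R i j • m j) P = P := by
  have hRm : Measurable (fun (m : Fin d → EuclideanSpace ℝ (Fin d)) (i : Fin d) =>
      ∑ j, R i j • m j) := by
    fun_prop
  refine Measure.ext_of_lintegral _ fun F hF => ?_
  rw [lintegral_map hF hRm, transport_aux P hON hinv R F hF,
    ← transport_aux P hON hinv (EuclideanSpace.basisFun _ _) F hF]
  simp [EuclideanSpace.basisFun_apply, PiLp.single_apply]

/-- moments separate -/
lemma moments_dense {E : Type*} [NormedAddCommGroup E] [InnerProductSpace ℝ E]
    [FiniteDimensional ℝ E] [MeasurableSpace E] [BorelSpace E]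
    (u : Measure E) [IsProbabilityMeasure u] (hu : ∀ᵐ x ∂u, ‖x‖ = 1)
    (f : E → ℝ) (hf : Integrable f u)
    (h : ∀ (a : E) (k : ℕ), ∫ x, (inner ℝ a x)^k * f x ∂u = 0) : f =ᵐ[u] 0 := by
  have hexp : ∀ a : E, ∫ x, Complex.exp (inner ℝ x a * Complex.I) * f x ∂u = 0 := by
    intro a
    have hs : HasSum (fun n : ℕ => ∫ x, ((inner ℝ x a * Complex.I)^n / (n.factorial : ℂ)) * f x ∂u)
        (∫ x, Complex.exp (inner ℝ x a * Complex.I) * f x ∂u) := by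
      refine hasSum_integral_of_dominated_convergence
        (fun n x => (‖a‖^n / n.factorial) * |f x|) ?_ ?_ ?_ ?_ ?_
      · intro n
        have := hf.aestronglyMeasurable
        have h3 : AEStronglyMeasurable (fun x => (f x : ℂ)) u :=
          Complex.continuous_ofReal.comp_aestronglyMeasurable this
        refine AEStronglyMeasurable.mul ?_ h3
        exact Continuous.aestronglyMeasurable (by fun_prop)
      · intro n
        filter_upwards [hu] with x hx
        simp only [norm_mul, norm_div, norm_pow, Complex.norm_I, mul_one, Complex.norm_real,
          Real.norm_eq_abs, Complex.norm_natCast]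
        gcongr
        have := abs_real_inner_le_norm x a
        rwa [hx, one_mul] at this
      · exact Filter.Eventually.of_forall fun x => (Real.summable_pow_div_factorial _).mul_right _
      · simp_rw [tsum_mul_right]
        exact hf.abs.const_mul _
      · refine Filter.Eventually.of_forall fun x => HasSum.mul_right _ ?_
        rw [Complex.exp_eq_exp_ℂ]
        refine (NormedSpace.exp_series_hasSum_exp' (𝕂 := ℂ) _).congr_fun ?_
        intro n
        rw [smul_eq_mul]; ring
    have hz : ∀ n : ℕ, ∫ x, ((inner ℝ x a * Complex.I)^n / (n.factorial : ℂ)) * f x ∂u = 0 := by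
      intro n
      have : ∀ x, ((inner ℝ x a * Complex.I)^n / (n.factorial : ℂ)) * f x
          = (Complex.I^n / (n.factorial : ℂ)) * (((inner ℝ a x)^n * f x : ℝ) : ℂ) := by
        intro x
        rw [real_inner_comm]; push_cast; ring
      simp_rw [this]
      rw [integral_const_mul, integral_complex_ofReal, h]; simp
    simp_rw [hz] at hs
    exact hs.unique hasSum_zero
  have hfm := hf.aestronglyMeasurable.aemeasurable
  let g1 : E → NNReal := fun x => (f x).toNNReal
  let g2 : E → NNReal := fun x => (-f x).toNNReal
  have hg1 : AEMeasurable g1 u := hfm.real_toNNReal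
  have hg2 : AEMeasurable g2 u := hfm.neg.real_toNNReal
  have hI1 : Integrable (fun x => (g1 x : ℝ)) u := hf.real_toNNReal
  have hI2 : Integrable (fun x => (g2 x : ℝ)) u := hf.neg.real_toNNReal
  have hfin : ∀ g : E → NNReal, Integrable (fun x => (g x : ℝ)) u →
      ∫⁻ x, (g x : ENNReal) ∂u ≠ ⊤ := by
    intro g hg
    have := hg.lintegral_lt_top
    simpa using this.ne
  have : IsFiniteMeasure (u.withDensity (fun x => (g1 x : ENNReal))) :=
    isFiniteMeasure_withDensity (hfin g1 hI1)
  have : IsFiniteMeasure (u.withDensity (fun x => (g2 x : ENNReal))) :=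
    isFiniteMeasure_withDensity (hfin g2 hI2)
  have hEq : u.withDensity (fun x => (g1 x : ENNReal)) = u.withDensity (fun x => (g2 x : ENNReal)) := by
    apply Measure.ext_of_charFun
    ext a
    have hIe : ∀ g : E → NNReal, AEMeasurable g u → Integrable (fun x => (g x : ℝ)) u →
        Integrable (fun x => g x • Complex.exp (inner ℝ x a * Complex.I)) u := by
      intro g hg hI
      refine hI.mono' ?_ ?_
      · refine AEStronglyMeasurable.smul hI.aestronglyMeasurable ?_
        exact Continuous.aestronglyMeasurable (by fun_prop)
      · refine Filter.Eventually.of_forall fun x => ?_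
        simp [NNReal.smul_def, Complex.norm_exp_ofReal_mul_I]
    rw [charFun_apply, charFun_apply, integral_withDensity_eq_integral_smul₀ hg1,
      integral_withDensity_eq_integral_smul₀ hg2, ← sub_eq_zero, ← integral_sub, ← hexp a]
    · congr 1; ext x
      simp only [NNReal.smul_def, Complex.real_smul, ← sub_mul, g1, g2]
      rw [mul_comm]; congr 1
      rw [← Complex.ofReal_sub]; congr 1
      simp only [Real.coe_toNNReal']
      exact max_zero_sub_max_neg_zero_eq_self _
    · exact hIe g1 hg1 hI1
    · exact hIe g2 hg2 hI2
  have h3 := (withDensity_eq_iff hg1.coe_nnreal_ennreal hg2.coe_nnreal_ennreal (hfin g1 hI1)).1 hEq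
  filter_upwards [h3] with x hx
  have hx' : g1 x = g2 x := by exact_mod_cast hx
  have h4 := max_zero_sub_max_neg_zero_eq_self (f x)
  have h5 : max (f x) 0 = max (-f x) 0 := by
    have := congrArg NNReal.toReal hx'
    simpa [g1, g2, Real.coe_toNNReal'] using this
  rw [← h4, h5]; simp

lemma pair_law {d : ℕ} {Ω : Type*} [MeasurableSpace Ω] (μ : Measure Ω) [IsProbabilityMeasure μ]
    (b : Ω → Fin d → EuclideanSpace ℝ (Fin d)) (hbmeas : Measurable b)
    (hON : ∀ᵐ ω ∂μ, Orthonormal ℝ (b ω))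
    (hinv : ∀ L : EuclideanSpace ℝ (Fin d) ≃ₗᵢ[ℝ] EuclideanSpace ℝ (Fin d),
      Measure.map (fun ω i => L (b ω i)) μ = Measure.map b μ)
    (i0 i1 : Fin d) (h01 : i0 ≠ i1) (u w : EuclideanSpace ℝ (Fin d))
    (hu : ‖u‖ = 1) (hw : ‖w‖ = 1) (huw : inner ℝ u w = 0) :
    Measure.map (fun ω => (∑ j, u j • b ω j, ∑ j, w j • b ω j)) μ
      = Measure.map (fun ω => (b ω i0, b ω i1)) μ := by
  classical
  let v : Fin d → EuclideanSpace ℝ (Fin d) := fun i => if i = i0 then u else w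
  have hv : Orthonormal ℝ (({i0, i1} : Set (Fin d)).domRestrict v) := by
    constructor
    · rintro ⟨i, hi⟩
      simp only [Set.domRestrict_apply, v]
      split_ifs <;> assumption
    · rintro ⟨i, hi⟩ ⟨j, hj⟩ hij
      have hijne : i ≠ j := fun h => hij (Subtype.ext h)
      simp only [Set.mem_insert_iff, Set.mem_singleton_iff] at hi hj
      simp only [Set.domRestrict_apply, v]
      rcases hi with rfl | rfl <;> rcases hj with rfl | rfl
      · exact absurd rfl hijne
      · simp [h01.symm, huw]
      · simp [h01.symm, real_inner_comm, huw]
      · exact absurd rfl hijne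
  obtain ⟨R, hR⟩ := hv.exists_orthonormalBasis_extension_of_card_eq (by simp)
  have hR0 : R i0 = u := by rw [hR i0 (by simp)]; simp [v]
  have hR1 : R i1 = w := by rw [hR i1 (by simp)]; simp [v, h01.symm]
  have : IsProbabilityMeasure (Measure.map b μ) :=
    Measure.isProbabilityMeasure_map hbmeas.aemeasurable
  have hset : MeasurableSet {m : Fin d → EuclideanSpace ℝ (Fin d) | Orthonormal ℝ m} := by
    simp only [orthonormal_iff_ite]
    simp only [Set.ofPred_forall]
    exact MeasurableSet.iInter fun i => MeasurableSet.iInter fun j =>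
      measurableSet_eq_fun (by fun_prop) (by fun_prop)
  have hP := transport (Measure.map b μ) ((ae_map_iff hbmeas.aemeasurable hset).2 hON) (by
    intro L
    have hL : Measurable L := L.continuous.measurable
    rw [Measure.map_map (by fun_prop) hbmeas]
    exact hinv L) R
  have hRm : Measurable (fun (m : Fin d → EuclideanSpace ℝ (Fin d)) (i : Fin d) =>
      ∑ j, R i j • m j) := by
    fun_prop
  have := congrArg (Measure.map (fun m : Fin d → EuclideanSpace ℝ (Fin d) => (m i0, m i1))) hP
  rw [Measure.map_map (by fun_prop) hRm, Measure.map_map (by fun_prop) hbmeas,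
    Measure.map_map (by fun_prop) hbmeas] at this
  simpa [Function.comp_def, hR0, hR1] using this

lemma key_formula {n : ℕ} (hn : 1 ≤ n) {Ω : Type*} [MeasurableSpace Ω] (μ : Measure Ω)
    [IsProbabilityMeasure μ]
    (b : Ω → Fin (n+1) → EuclideanSpace ℝ (Fin (n+1))) (hbmeas : Measurable b)
    (hON : ∀ᵐ ω ∂μ, Orthonormal ℝ (b ω))
    (hinv : ∀ L : EuclideanSpace ℝ (Fin (n+1)) ≃ₗᵢ[ℝ] EuclideanSpace ℝ (Fin (n+1)),
      Measure.map (fun ω i => L (b ω i)) μ = Measure.map b μ)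
    (i0 i1 : Fin (n+1)) (h01 : i0 ≠ i1) :
    ∃ c : ℕ → ℝ, (∀ k, Odd k → c k = 0) ∧ (∀ k, |c (k+1)| ≤ 1 / (n : ℝ)) ∧
      ∀ (a : EuclideanSpace ℝ (Fin (n+1))) (k : ℕ) (g : EuclideanSpace ℝ (Fin (n+1)) → ℝ),
      Measurable g → Integrable (fun ω => g (b ω i1)) μ →
      ∃ N : Ω → ℝ, (∀ᵐ ω ∂μ, N ω ^ 2 = ‖a‖^2 - (inner ℝ a (b ω i1))^2) ∧
      ∫ ω, (inner ℝ a (b ω i0))^k * g (b ω i1) ∂μ = c k * ∫ ω, N ω ^ k * g (b ω i1) ∂μ := by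
  have : Nonempty (Fin n) := ⟨⟨0, hn⟩⟩
  obtain ⟨ν, hν, hν1, hνL⟩ := exists_unif (EuclideanSpace ℝ (Fin n))
  obtain ⟨c, hc0, hcb, hc⟩ := exists_coef (EuclideanSpace ℝ (Fin n)) ν hν1 hνL
  refine ⟨c, hc0, by simpa using hcb, ?_⟩
  intro a k g hg hgi
  let v : Ω → EuclideanSpace ℝ (Fin n) :=
    fun ω => WithLp.toLp 2 (fun j => inner ℝ a (b ω (i1.succAbove j)))
  have hvm : Measurable v := by
    have : Continuous (fun m : Fin (n+1) → EuclideanSpace ℝ (Fin (n+1)) =>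
      (WithLp.toLp 2 (fun j => inner ℝ a (m (i1.succAbove j))) : EuclideanSpace ℝ (Fin n))) := by
      fun_prop
    exact this.measurable.comp hbmeas
  have hvn : ∀ᵐ ω ∂μ, ‖v ω‖ ^ 2 = ‖a‖^2 - (inner ℝ a (b ω i1))^2 := by
    filter_upwards [hON] with ω hω
    obtain ⟨B, hB⟩ := exists_onb _ hω
    have h1 := B.sum_sq_norm_inner_left a
    simp only [Real.norm_eq_abs, sq_abs, hB] at h1
    rw [Fin.sum_univ_succAbove _ i1] at h1
    rw [EuclideanSpace.real_norm_sq_eq]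
    simp only [v]
    linarith
  refine ⟨fun ω => ‖v ω‖, hvn, ?_⟩
  have hX : ∀ i, Measurable (fun ω => b ω i) := fun i => by fun_prop
  have h1 : ∀ᵐ w ∂ν, ∫ ω, (inner ℝ w (v ω))^k * g (b ω i1) ∂μ
      = ∫ ω, (inner ℝ a (b ω i0))^k * g (b ω i1) ∂μ := by
    filter_upwards [hν1] with w hw
    let x : EuclideanSpace ℝ (Fin (n+1)) := WithLp.toLp 2 (Fin.insertNth (α := fun _ => ℝ) i1 0 w.ofLp)
    have hx : ‖x‖ = 1 := by
      have h2 : ‖x‖^2 = ‖w‖^2 := by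
        rw [EuclideanSpace.real_norm_sq_eq, EuclideanSpace.real_norm_sq_eq,
          Fin.sum_univ_succAbove _ i1]
        simp [x]
      rw [hw] at h2
      have := norm_nonneg x
      nlinarith
    have hp := pair_law μ b hbmeas hON hinv i0 i1 h01 x (EuclideanSpace.single i1 1) hx (by simp)
      (by simp [x, EuclideanSpace.inner_single_right])
    have hF : Measurable (fun p : EuclideanSpace ℝ (Fin (n+1)) × EuclideanSpace ℝ (Fin (n+1)) =>
      (inner ℝ a p.1)^k * g p.2) := by fun_prop
    have h3 := congrArg (fun ρ => ∫ p, (inner ℝ a p.1)^k * g p.2 ∂ρ) hp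
    simp only at h3
    rw [integral_map (by fun_prop) hF.aestronglyMeasurable,
      integral_map (by fun_prop) hF.aestronglyMeasurable] at h3
    rw [← h3]
    congr 1; ext ω
    congr 2
    · rw [Fin.sum_univ_succAbove _ i1]
      simp only [x, Fin.insertNth_apply_same, Fin.insertNth_apply_succAbove, zero_smul, zero_add,
        inner_sum, inner_smul_right, v, PiLp.inner_apply]
      simp [mul_comm, Finset.mul_sum]
    · simp [PiLp.single_apply]
  have hbd : ∀ᵐ ω ∂μ, ‖v ω‖ ≤ ‖a‖ := by
    filter_upwards [hvn] with ω hω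
    refine abs_le_of_sq_le_sq' ?_ (norm_nonneg a) |>.2
    nlinarith [sq_nonneg (inner ℝ a (b ω i1))]
  calc _ = ∫ w, ∫ ω, (inner ℝ w (v ω))^k * g (b ω i1) ∂μ ∂ν := by
        rw [integral_congr_ae h1]; simp
    _ = ∫ ω, ∫ w, (inner ℝ w (v ω))^k * g (b ω i1) ∂ν ∂μ := by
        refine integral_integral_swap ?_
        have hI : Integrable (fun p : EuclideanSpace ℝ (Fin n) × Ω => ‖a‖^k * |g (b p.2 i1)|)
            (ν.prod μ) := (hgi.abs.comp_snd ν).const_mul _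
        refine hI.mono' ?_ ?_
        · refine Measurable.aestronglyMeasurable ?_
          unfold Function.uncurry
          have := hg.comp (hX i1)
          have h5 : Measurable (fun p : EuclideanSpace ℝ (Fin n) × Ω => inner ℝ p.1 (v p.2)) :=
            Measurable.inner measurable_fst (hvm.comp measurable_snd)
          exact (h5.pow_const k).mul (this.comp measurable_snd)
        · have e1 : ∀ᵐ p ∂(ν.prod μ), ‖p.1‖ = 1 := Measure.quasiMeasurePreserving_fst.ae hν1
          have e2 : ∀ᵐ p ∂(ν.prod μ), ‖v p.2‖ ≤ ‖a‖ := Measure.quasiMeasurePreserving_snd.ae hbd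
          filter_upwards [e1, e2] with p h1 h2
          simp only [Function.uncurry, norm_mul, norm_pow, Real.norm_eq_abs]
          gcongr
          calc _ ≤ _ := abs_real_inner_le_norm _ _
            _ ≤ _ := by rw [h1, one_mul]; exact h2
    _ = _ := by
        rw [← integral_const_mul]
        congr 1; ext ω
        rw [integral_mul_const, hc]; ring

lemma core {n : ℕ} (hn : 1 ≤ n) {Ω : Type*} [MeasurableSpace Ω] (μ : Measure Ω)
    [IsProbabilityMeasure μ]
    (b : Ω → Fin (n+1) → EuclideanSpace ℝ (Fin (n+1))) (hbmeas : Measurable b)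
    (hON : ∀ᵐ ω ∂μ, Orthonormal ℝ (b ω))
    (hinv : ∀ L : EuclideanSpace ℝ (Fin (n+1)) ≃ₗᵢ[ℝ] EuclideanSpace ℝ (Fin (n+1)),
      Measure.map (fun ω i => L (b ω i)) μ = Measure.map b μ)
    (i0 i1 : Fin (n+1)) (h01 : i0 ≠ i1)
    (φ : EuclideanSpace ℝ (Fin (n+1)) → ℝ) (hφ : Measurable φ)
    (hint1 : Integrable (fun ω => φ (b ω i0)) μ)
    (hint2 : Integrable (fun ω => φ (b ω i0) ^ 2) μ) :
    |(∫ ω, φ (b ω i0) * φ (b ω i1) ∂μ) - (∫ ω, φ (b ω i0) ∂μ) * ∫ ω, φ (b ω i1) ∂μ|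
      ≤ 1 / (n : ℝ) * ((∫ ω, φ (b ω i0) ^ 2 ∂μ) - (∫ ω, φ (b ω i0) ∂μ) ^ 2) := by
  obtain ⟨c, hc0, hcb, hkey⟩ := key_formula hn μ b hbmeas hON hinv i0 i1 h01
  have hX : ∀ i, Measurable (fun ω => b ω i) := fun i => by fun_prop
  -- swap symmetry
  have hswap : Measure.map (fun ω => (b ω i1, b ω i0)) μ
      = Measure.map (fun ω => (b ω i0, b ω i1)) μ := by
    have := pair_law μ b hbmeas hON hinv i0 i1 h01 (EuclideanSpace.single i1 1)
      (EuclideanSpace.single i0 1) (by simp) (by simp) (by simp [EuclideanSpace.inner_single_right, h01])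
    simpa [PiLp.single_apply] using this
  set u : Measure (EuclideanSpace ℝ (Fin (n+1))) := Measure.map (fun ω => b ω i0) μ with hu
  have : IsProbabilityMeasure u := Measure.isProbabilityMeasure_map (hX i0).aemeasurable
  have mp0 : MeasurePreserving (fun ω => b ω i0) μ u := ⟨hX i0, rfl⟩
  have mp1 : MeasurePreserving (fun ω => b ω i1) μ u := by
    refine ⟨hX i1, ?_⟩
    have := congrArg (Measure.map Prod.fst) hswap
    rwa [Measure.map_map (by fun_prop) (by fun_prop), Measure.map_map (by fun_prop) (by fun_prop)]
      at this
  have hu1 : ∀ᵐ x ∂u, ‖x‖ = 1 := by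
    rw [hu, ae_map_iff (hX i0).aemeasurable (measurableSet_eq_fun (by fun_prop) (by fun_prop))]
    filter_upwards [hON] with ω hω using hω.1 i0
  -- the operator
  let U0 : Lp ℝ 2 u →ₗᵢ[ℝ] Lp ℝ 2 μ := Lp.compMeasurePreservingₗᵢ ℝ _ mp0
  let U1 : Lp ℝ 2 u →ₗᵢ[ℝ] Lp ℝ 2 μ := Lp.compMeasurePreservingₗᵢ ℝ _ mp1
  let T : Lp ℝ 2 u →L[ℝ] Lp ℝ 2 u :=
    (ContinuousLinearMap.adjoint U1.toContinuousLinearMap).comp U0.toContinuousLinearMap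
  have hT : ∀ f g : Lp ℝ 2 u, inner ℝ (T f) g = ∫ ω, f (b ω i0) * g (b ω i1) ∂μ := by
    intro f g
    have e : inner ℝ (T f) g = inner ℝ (U0 f) (U1 g) :=
      ContinuousLinearMap.adjoint_inner_left U1.toContinuousLinearMap g (U0 f)
    rw [e, L2.inner_def]
    refine integral_congr_ae ?_
    have e0 : U0 f =ᵐ[μ] f ∘ (fun ω => b ω i0) := Lp.coeFn_compMeasurePreserving f mp0
    have e1 : U1 g =ᵐ[μ] g ∘ (fun ω => b ω i1) := Lp.coeFn_compMeasurePreserving g mp1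
    filter_upwards [e0, e1] with ω h0 h1
    rw [h0, h1]
    simp [mul_comm]
  have hin : ∀ f g : Lp ℝ 2 u, inner ℝ f g = ∫ ω, f (b ω i1) * g (b ω i1) ∂μ := by
    intro f g
    have hs : StronglyMeasurable (fun x => inner ℝ (f x) (g x)) :=
      (Lp.stronglyMeasurable f).inner (Lp.stronglyMeasurable g)
    have h := integral_map (μ := μ) (hX i1).aemeasurable hs.aestronglyMeasurable
    rw [mp1.map_eq] at h
    rw [L2.inner_def, h]
    simp [mul_comm]
  have hsym : ∀ f g, inner ℝ (T f) g = inner ℝ f (T g) := by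
    intro f g
    rw [hT, real_inner_comm, hT]
    have hF : Measurable (fun p : (EuclideanSpace ℝ (Fin (n+1))) × (EuclideanSpace ℝ (Fin (n+1))) => f p.1 * g p.2) :=
      ((Lp.stronglyMeasurable f).measurable.comp measurable_fst).mul
        ((Lp.stronglyMeasurable g).measurable.comp measurable_snd)
    have h3 : ∫ p, f p.1 * g p.2 ∂(Measure.map (fun ω => (b ω i1, b ω i0)) μ)
        = ∫ p, f p.1 * g p.2 ∂(Measure.map (fun ω => (b ω i0, b ω i1)) μ) := by rw [hswap]
    rw [integral_map (by fun_prop) hF.aestronglyMeasurable,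
      integral_map (by fun_prop) hF.aestronglyMeasurable] at h3
    rw [← h3]
    congr 1; ext ω; ring
  -- moments
  have hpm : ∀ (a : (EuclideanSpace ℝ (Fin (n+1)))) (k : ℕ), MemLp (fun x => (inner ℝ a x)^k) 2 u := by
    intro a k
    refine MemLp.of_bound (C := ‖a‖^k) (by fun_prop) ?_
    filter_upwards [hu1] with x hx
    rw [norm_pow]
    gcongr
    have := norm_inner_le_norm (𝕜 := ℝ) a x
    rwa [hx, mul_one] at this
  let P : (EuclideanSpace ℝ (Fin (n+1))) → ℕ → Lp ℝ 2 u := fun a k => (hpm a k).toLp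
  have hP0 : ∀ a k, ∀ᵐ ω ∂μ, P a k (b ω i0) = (inner ℝ a (b ω i0))^k := fun a k =>
    mp0.quasiMeasurePreserving.ae (hpm a k).coeFn_toLp
  have hP1 : ∀ a k, ∀ᵐ ω ∂μ, P a k (b ω i1) = (inner ℝ a (b ω i1))^k := fun a k =>
    mp1.quasiMeasurePreserving.ae (hpm a k).coeFn_toLp
  have hgi : ∀ g : Lp ℝ 2 u, Integrable (fun ω => g (b ω i1)) μ := fun g =>
    ((Lp.memLp g).comp_measurePreserving mp1).integrable (by norm_num)
  have hTkey : ∀ a k (g : Lp ℝ 2 u), ∃ N : Ω → ℝ,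
      (∀ᵐ ω ∂μ, N ω ^ 2 = ‖a‖^2 - (inner ℝ a (b ω i1))^2) ∧
      inner ℝ (T (P a k)) g = c k * ∫ ω, N ω ^ k * g (b ω i1) ∂μ := by
    intro a k g
    obtain ⟨N, hN, h⟩ := hkey a k g (Lp.stronglyMeasurable g).measurable (hgi g)
    refine ⟨N, hN, ?_⟩
    rw [← h, hT]
    refine integral_congr_ae ?_
    filter_upwards [hP0 a k] with ω hω
    rw [hω]
  have hTodd : ∀ a k, Odd k → T (P a k) = 0 := by
    intro a k hk
    refine ext_inner_right ℝ fun g => ?_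
    obtain ⟨N, hN, h⟩ := hTkey a k g
    rw [h, hc0 k hk]; simp
  have hTeven : ∀ a m, T (P a (2*m)) = c (2*m) • ∑ j ∈ Finset.range (m+1),
      ((-1)^j * (‖a‖^2)^(m-j) * (m.choose j : ℝ)) • P a (2*j) := by
    intro a m
    refine ext_inner_right ℝ fun g => ?_
    obtain ⟨N, hN, h⟩ := hTkey a (2*m) g
    rw [h, inner_smul_left, sum_inner]
    have e : ∀ (r : ℝ) (j : ℕ), inner ℝ (r • P a (2*j)) g
        = ∫ ω, r * (P a (2*j) (b ω i1) * g (b ω i1)) ∂μ := fun r j => by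
      rw [real_inner_smul_left, hin, integral_const_mul]
    simp only [e, conj_trivial]
    congr 1
    rw [← integral_finsetSum]
    · refine integral_congr_ae ?_
      have hall : ∀ᵐ ω ∂μ, ∀ j, P a (2*j) (b ω i1) = (inner ℝ a (b ω i1))^(2*j) :=
        ae_all_iff.2 fun j => hP1 a (2*j)
      filter_upwards [hN, hall] with ω h1 h2
      rw [pow_mul, h1, sub_eq_add_neg, add_comm, add_pow, Finset.sum_mul]
      refine Finset.sum_congr rfl fun j _ => ?_
      rw [h2, neg_pow, pow_mul (inner ℝ a (b ω i1)) 2 j]; ring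
    · intro j _
      refine Integrable.const_mul ?_ _
      exact ((Lp.memLp (P a (2*j))).comp_measurePreserving mp1).integrable_mul
        ((Lp.memLp g).comp_measurePreserving mp1)
  let V : ℕ → Submodule ℝ (Lp ℝ 2 u) := fun k =>
    Submodule.span ℝ {f | ∃ a j, j ≤ k ∧ f = P a j}
  have hPV : ∀ a j k, j ≤ k → P a j ∈ V k := fun a j k h =>
    Submodule.subset_span ⟨a, j, h, rfl⟩
  have hmono : Monotone V := by
    intro k l hkl
    refine Submodule.span_mono ?_
    rintro f ⟨a, j, hj, rfl⟩
    exact ⟨a, j, hj.trans hkl, rfl⟩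
  have hTP : ∀ a j k, j ≤ k → T (P a j) ∈ V k := by
    intro a j k hjk
    rcases Nat.even_or_odd' j with ⟨m, rfl | rfl⟩
    · rw [hTeven]
      refine Submodule.smul_mem _ _ (Submodule.sum_mem _ fun i hi => Submodule.smul_mem _ _ ?_)
      refine hPV a _ _ ?_
      have := Finset.mem_range.1 hi
      omega
    · rw [hTodd a _ ⟨m, rfl⟩]; exact Submodule.zero_mem _
  let lam : ℕ → ℝ := fun k => c k * (-1)^(k/2)
  have hlam : ∀ k, |lam (k+1)| ≤ 1 / (n:ℝ) := by
    intro k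
    simp only [lam, abs_mul, abs_pow, abs_neg, abs_one, one_pow, mul_one]
    exact hcb k
  have hV0 : ∀ x ∈ V 0, T x ∈ V 0 := by
    have : V 0 ≤ (V 0).comap T.toLinearMap := by
      refine Submodule.span_le.2 ?_
      rintro f ⟨a, j, hj, rfl⟩
      exact hTP a j 0 hj
    exact fun x hx => this hx
  have hVs : ∀ k, ∀ x ∈ V (k+1), T x - lam (k+1) • x ∈ V k := by
    intro k
    have : V (k+1) ≤ (V k).comap (T - lam (k+1) • ContinuousLinearMap.id ℝ _).toLinearMap := by
      refine Submodule.span_le.2 ?_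
      rintro f ⟨a, j, hj, rfl⟩
      change T (P a j) - lam (k+1) • P a j ∈ V k
      rcases Nat.lt_or_ge j (k+1) with hlt | hge
      · exact Submodule.sub_mem _ (hTP a j k (by omega))
          (Submodule.smul_mem _ _ (hPV a j k (by omega)))
      · have hjk : j = k+1 := le_antisymm hj hge
        rw [← hjk]
        rcases Nat.even_or_odd' j with ⟨m, hm | hm⟩
        · have h2 : lam j = c j * (-1)^m := by
            simp only [lam]; congr 2; omega
          rw [h2, hm, hTeven, Finset.sum_range_succ]
          simp only [Nat.sub_self, pow_zero, mul_one, Nat.choose_self, Nat.cast_one, smul_add,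
            ← smul_smul, add_sub_cancel_right]
          refine Submodule.smul_mem _ _ (Submodule.sum_mem _ fun i hi => ?_)
          have := Finset.mem_range.1 hi
          have h4 := hPV a (2*i) k (by omega)
          simp only [smul_smul]
          exact Submodule.smul_mem _ _ h4
        · rw [hTodd a j ⟨m, hm⟩]
          simp only [lam, hc0 j ⟨m, hm⟩]
          simp
    exact fun x hx => this hx
  have hdense : ⊤ ≤ (⨆ k, V k).topologicalClosure := by
    rw [top_le_iff, Submodule.topologicalClosure_eq_top_iff, Submodule.eq_bot_iff]
    intro f hf
    have h1 : ∀ a k, inner ℝ (P a k) f = 0 := fun a k =>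
      (Submodule.mem_orthogonal _ _).1 hf _ (le_iSup V k (hPV a k k le_rfl))
    have h2 := moments_dense u hu1 f ((Lp.memLp f).integrable (by norm_num)) (by
      intro a k
      rw [← h1 a k, L2.inner_def]
      refine integral_congr_ae ?_
      filter_upwards [(hpm a k).coeFn_toLp] with x hx
      simp only [P]
      rw [hx]; simp [mul_comm])
    exact (Lp.eq_zero_iff_ae_eq_zero).2 h2
  -- conclusion
  set M := ∫ ω, φ (b ω i0) ∂μ with hM
  have hφu1 : Integrable φ u := (mp0.integrable_comp hφ.aestronglyMeasurable).1 hint1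
  have hφL : MemLp φ 2 u := by
    rw [memLp_two_iff_integrable_sq hφ.aestronglyMeasurable]
    exact (mp0.integrable_comp (hφ.pow_const 2).aestronglyMeasurable).1 hint2
  have hφM : MemLp (fun x => φ x - M) 2 u := hφL.sub (memLp_const M)
  have hM1 : ∫ ω, φ (b ω i1) ∂μ = M := by
    rw [hM, ← integral_map (hX i0).aemeasurable hφ.aestronglyMeasurable,
      ← integral_map (hX i1).aemeasurable hφ.aestronglyMeasurable, mp1.map_eq]
  let f : Lp ℝ 2 u := hφM.toLp
  have hf0 : ∀ᵐ ω ∂μ, f (b ω i0) = φ (b ω i0) - M := mp0.quasiMeasurePreserving.ae hφM.coeFn_toLp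
  have hf1 : ∀ᵐ ω ∂μ, f (b ω i1) = φ (b ω i1) - M := mp1.quasiMeasurePreserving.ae hφM.coeFn_toLp
  have hi1 : Integrable (fun ω => φ (b ω i1)) μ :=
    (mp1.integrable_comp hφ.aestronglyMeasurable).2 hφu1
  have hL0 : MemLp (fun ω => φ (b ω i0)) 2 μ := hφL.comp_measurePreserving mp0
  have hL1 : MemLp (fun ω => φ (b ω i1)) 2 μ := hφL.comp_measurePreserving mp1
  have hforth : ∀ y ∈ V 0, inner ℝ y f = 0 := by
    have : V 0 ≤ (ℝ ∙ f)ᗮ := by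
      refine Submodule.span_le.2 ?_
      rintro g ⟨a, j, hj, rfl⟩
      obtain rfl : j = 0 := by omega
      rw [SetLike.mem_coe, Submodule.mem_orthogonal_singleton_iff_inner_left, hin]
      have : ∀ᵐ ω ∂μ, P a 0 (b ω i1) * f (b ω i1) = φ (b ω i1) - M := by
        filter_upwards [hP1 a 0, hf1] with ω h1 h2
        rw [h1, h2]; simp
      rw [integral_congr_ae this, integral_sub hi1 (integrable_const _), hM1]
      simp
    exact fun y hy => Submodule.mem_orthogonal_singleton_iff_inner_left.1 (this hy)
  have hfinal := hb_main T hsym V hmono hdense lam (1/(n:ℝ)) hlam hV0 hVs f hforth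
  have hA : inner ℝ (T f) f = (∫ ω, φ (b ω i0) * φ (b ω i1) ∂μ) - M * M := by
    rw [hT]
    have : ∀ᵐ ω ∂μ, f (b ω i0) * f (b ω i1)
        = φ (b ω i0) * φ (b ω i1) - (M * φ (b ω i0) + M * φ (b ω i1) - M * M) := by
      filter_upwards [hf0, hf1] with ω h1 h2
      rw [h1, h2]; ring
    have hi01 : Integrable (fun ω => φ (b ω i0) * φ (b ω i1)) μ := hL0.integrable_mul hL1
    have j0 := hint1.const_mul M
    have j1 := hi1.const_mul M
    have j01 : Integrable (fun ω => M * φ (b ω i0) + M * φ (b ω i1)) μ := j0.add j1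
    have j2 : Integrable (fun ω => M * φ (b ω i0) + M * φ (b ω i1) - M * M) μ :=
      j01.sub (integrable_const _)
    rw [integral_congr_ae this, integral_sub hi01 j2,
      integral_sub j01 (integrable_const _), integral_add j0 j1,
      integral_const_mul, integral_const_mul, hM1, ← hM]
    simp
  have hB : ‖f‖^2 = (∫ ω, φ (b ω i0)^2 ∂μ) - M^2 := by
    have e : ∫ ω, φ (b ω i0)^2 ∂μ = ∫ ω, φ (b ω i1)^2 ∂μ := by
      have hm2 : AEStronglyMeasurable (fun x => φ x ^2) u := (hφ.pow_const 2).aestronglyMeasurable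
      rw [← integral_map (f := fun x => φ x ^ 2) (hX i0).aemeasurable hm2,
        ← integral_map (f := fun x => φ x ^ 2) (hX i1).aemeasurable (by rw [mp1.map_eq]; exact hm2),
        mp1.map_eq]
    rw [← real_inner_self_eq_norm_sq, hin, e]
    have : ∀ᵐ ω ∂μ, f (b ω i1) * f (b ω i1)
        = φ (b ω i1)^2 - (2 * M * φ (b ω i1) - M * M) := by
      filter_upwards [hf1] with ω h2
      rw [h2]; ring
    have j1 := hi1.const_mul (2*M)
    have j2 : Integrable (fun ω => 2 * M * φ (b ω i1) - M * M) μ := j1.sub (integrable_const _)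
    rw [integral_congr_ae this, integral_sub hL1.integrable_sq j2,
      integral_sub j1 (integrable_const _), integral_const_mul, hM1]
    simp; ring
  rw [hA, hB] at hfinal
  rw [hM1]
  exact hfinal


/-- if `(b_1, …, b_d)` is a uniformly random orthonormal basis of `ℝ^d`
(`d ≥ 4`), i.e. an a.s. orthonormal random `d`-tuple whose law is invariant under all
rotations, and `φ` is square-integrable on the sphere, then
`|Cov(φ(b_1), φ(b_2))| ≤ Var_u(φ)/(d-1)`; here, since each `b_i` is uniform on the sphere,
the variance of `φ` under the uniform measure equals `Var(φ(b_1))`. -/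
theorem covariance_bound_random_onb
    (d : ℕ) (hd : 4 ≤ d)
    {Ω : Type*} [MeasurableSpace Ω] (μ : Measure Ω) [IsProbabilityMeasure μ]
    (b : Ω → Fin d → EuclideanSpace ℝ (Fin d)) (hbmeas : Measurable b)
    (hON : ∀ᵐ ω ∂μ, Orthonormal ℝ (b ω))
    (hinv : ∀ L : EuclideanSpace ℝ (Fin d) ≃ₗᵢ[ℝ] EuclideanSpace ℝ (Fin d),
      Measure.map (fun ω i => L (b ω i)) μ = Measure.map b μ)
    (φ : EuclideanSpace ℝ (Fin d) → ℝ) (hφ : Measurable φ)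
    (hint1 : Integrable (fun ω => φ (b ω ⟨0, by omega⟩)) μ)
    (hint2 : Integrable (fun ω => φ (b ω ⟨0, by omega⟩) ^ 2) μ)
    (hint3 : Integrable (fun ω => φ (b ω ⟨0, by omega⟩) * φ (b ω ⟨1, by omega⟩)) μ) :
    |(∫ ω, φ (b ω ⟨0, by omega⟩) * φ (b ω ⟨1, by omega⟩) ∂μ)
        - (∫ ω, φ (b ω ⟨0, by omega⟩) ∂μ) * ∫ ω, φ (b ω ⟨1, by omega⟩) ∂μ|
      ≤ ((∫ ω, φ (b ω ⟨0, by omega⟩) ^ 2 ∂μ) - (∫ ω, φ (b ω ⟨0, by omega⟩) ∂μ) ^ 2)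
          / ((d : ℝ) - 1) := by
  obtain ⟨n, rfl⟩ : ∃ n, d = n + 1 := ⟨d - 1, by omega⟩
  have h := core (by omega : 1 ≤ n) μ b hbmeas hON hinv ⟨0, by omega⟩ ⟨1, by omega⟩
    (by simp [Fin.ext_iff]) φ hφ hint1 hint2
  refine h.trans (le_of_eq ?_)
  push_cast
  rw [add_sub_cancel_right]; ring
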